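/- Let n > 1 and let r = (r_1, …, r_n) ∈ ℕ^n satisfy r_1 + 2r_2 + ⋯ + n·r_n = n and |r| := r_1 + ⋯ + r_n < n. For a set partition π of [n], define the word ψ(π) = w_1 w_2 ⋯ w_{n−1} by: w_i is the letter j if i is the minimal element of a block of π of size j, and w_i is the letter 0 otherwise. Then π ↦ ψ(π) is a bijection from the set of connected nonnesting set partitions of [n] of type r onto ℬ(r), the set of words of length n − 1 lying in ℬ with exactly n − |r| − 1 occurrences of letter 0 and exactly r_i occurrences of letter i for 1 ≤ i ≤ n. -/

import Mathlib

/-- A set partition of `[n] = {1, …, n}`, encoded as a `Finpartition` of `Finset.Icc 1 n`. -/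
abbrev SetPartitionOn (n : ℕ) := Finpartition (Finset.Icc 1 n)

/-- `π` has type `r = (r_1, …, r_n)` if for each `i` the number of blocks of size `i` is `r_i`. -/
def HasType {n : ℕ} (π : SetPartitionOn n) (r : Fin n → ℕ) : Prop :=
  ∀ i : Fin n, (π.parts.filter (fun B => B.card = i.1 + 1)).card = r i

/-- `π` is noncrossing: there are no `a < b < c < d` with `a, c` in one block and
`b, d` in a different block. -/
def Noncrossing {n : ℕ} (π : SetPartitionOn n) : Prop :=
  ¬ ∃ a b c d : ℕ, a < b ∧ b < c ∧ c < d ∧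
      ∃ B ∈ π.parts, ∃ B' ∈ π.parts, B ≠ B' ∧ a ∈ B ∧ c ∈ B ∧ b ∈ B' ∧ d ∈ B'

/-- `(i, j)` is an arc of `π`: `i < j` lie in a common block with no element of that
block strictly between them. -/
def IsArc {n : ℕ} (π : SetPartitionOn n) (i j : ℕ) : Prop :=
  i < j ∧ ∃ B ∈ π.parts, i ∈ B ∧ j ∈ B ∧ ∀ k ∈ B, ¬ (i < k ∧ k < j)

/-- `π` is nonnesting: there are no arcs `(a, d)` and `(b, c)` with `a < b < c < d`. -/
def Nonnesting {n : ℕ} (π : SetPartitionOn n) : Prop :=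
  ¬ ∃ a b c d : ℕ, a < b ∧ b < c ∧ c < d ∧ IsArc π a d ∧ IsArc π b c

/-- `i ∈ {1, …, n-1}` is a cut of `π` if no block contains both an element `≤ i` and an
element `> i`. -/
def IsCut {n : ℕ} (π : SetPartitionOn n) (i : ℕ) : Prop :=
  1 ≤ i ∧ i ≤ n - 1 ∧ ∀ B ∈ π.parts, (∀ x ∈ B, x ≤ i) ∨ (∀ x ∈ B, i < x)

/-- `π` is connected if it has no cuts. -/
def Connected {n : ℕ} (π : SetPartitionOn n) : Prop := ∀ i, ¬ IsCut π i

/-- The number of cuts of `π`; `π` has exactly `m` connected components iff this is `m - 1`. -/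
noncomputable def cutCount {n : ℕ} (π : SetPartitionOn n) : ℕ := Set.ncard {i : ℕ | IsCut π i}

/-- The weight of a word: the sum of `(a - 1)` over its letters, as an integer. -/
def wt (w : List ℕ) : ℤ := (w.map (fun a => (a : ℤ) - 1)).sum

/-- The set `ℬ` of words of weight 1 all of whose nonempty prefixes have positive weight. -/
def Bset : Set (List ℕ) :=
  {w | wt w = 1 ∧ ∀ j, 0 < j → j ≤ w.length → 0 < wt (w.take j)}

/-- The word `ψ(π) = w_1 ⋯ w_{n-1}`: `w_i` is the letter `j` if `i` is the minimal element
of a block of `π` of size `j`, and is the letter `0` otherwise.  (The `i`-th letter is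
computed as the sum of `|B|` over the (at most one) block `B` whose minimum is `i`.) -/
def psi (n : ℕ) (π : SetPartitionOn n) : List ℕ :=
  (List.range (n - 1)).map (fun k =>
    (π.parts.filter (fun B => (k + 1) ∈ B ∧ ∀ x ∈ B, k + 1 ≤ x)).sum Finset.card)

/-!
Scan `[n]` from left to right and call an element pending if it is the last element so far of a
block which is not yet complete.  Nonnesting means that a position which does not open a block
always continues the block of the *least* pending element: continuing from a later one would nest
the new arc below the arc leaving the least one.  Hence a nonnesting partition is determined by the
sizes of its blocks, indexed by their minima, and any prescribed sizes with sum `n` are realized as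
long as this first-in-first-out rule never runs out of pending elements, that is, as long as the
sizes promised so far exceed the number of positions filled whenever a block has to be continued.

The sum of the letters `w_1, …, w_i` of `ψ(π)` counts the elements whose block minimum is at most
`i`.  It is at least `i`, with equality iff `i` is a cut, so the positivity of the prefix weights
says exactly that `π` is connected, and it also keeps the first-in-first-out rule from getting
stuck.
-/
section FiberCount

open Finset

/-- The number of `x ∈ [k]` with `m x = r`.  If `m` sends every element of `[k]` to the minimum of
its block, this is the size of the block with minimum `r`, or `0` if there is no such block. -/
def fiberCount (m : ℕ → ℕ) (k r : ℕ) : ℕ := #{x ∈ Icc 1 k | m x = r}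

/-- `m` maps every element of `[n]` to the minimum of its fibre, i.e. `m` is the map from elements
to block minima of a set partition of `[n]`. -/
def IsMinMap (n : ℕ) (m : ℕ → ℕ) : Prop := ∀ x ∈ Icc 1 n, 1 ≤ m x ∧ m x ≤ x ∧ m (m x) = m x

variable {m m' : ℕ → ℕ} {k l n r : ℕ}

lemma fiberCount_succ (m : ℕ → ℕ) (k r : ℕ) :
    fiberCount m (k + 1) r = fiberCount m k r + if m (k + 1) = r then 1 else 0 := by
  unfold fiberCount
  rw [← insert_Icc_right_eq_Icc_add_one (by omega), filter_insert]
  split_ifs with h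
  · exact card_insert_of_notMem (by simp)
  · rfl

lemma fiberCount_congr (h : ∀ x ∈ Icc 1 k, m x = m' x) : fiberCount m k = fiberCount m' k := by
  funext r
  exact congrArg card (filter_congr fun x hx => by rw [h x hx])

lemma fiberCount_lt_fiberCount_iff (hkl : k ≤ l) :
    fiberCount m k r < fiberCount m l r ↔ ∃ x ∈ Ioc k l, m x = r := by
  have hsub : {x ∈ Icc 1 k | m x = r} ⊆ {x ∈ Icc 1 l | m x = r} :=
    filter_subset_filter _ (Icc_subset_Icc_right hkl)
  constructor
  · intro h
    obtain ⟨x, hxl, hxk⟩ := exists_mem_notMem_of_card_lt_card h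
    exact ⟨x, by grind⟩
  · rintro ⟨x, hx, hxr⟩
    exact card_lt_card ((ssubset_iff_of_subset hsub).2 ⟨x, by grind⟩)

lemma fiberCount_ne_zero_iff_exists : fiberCount m k r ≠ 0 ↔ ∃ x ∈ Icc 1 k, m x = r := by
  simp [fiberCount, filter_eq_empty_iff, and_assoc]

lemma IsMinMap.map_mem (hm : IsMinMap n m) {x : ℕ} (hx : x ∈ Icc 1 n) : m x ∈ Icc 1 n := by
  have := hm x hx
  grind

lemma IsMinMap.fiberCount_ne_zero_iff (hm : IsMinMap n m) (hr : r ∈ Icc 1 n) :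
    fiberCount m n r ≠ 0 ↔ m r = r := by
  rw [fiberCount_ne_zero_iff_exists]
  exact ⟨fun ⟨x, hx, hxr⟩ => hxr ▸ (hm x hx).2.2, fun h => ⟨r, hr, h⟩⟩

lemma IsMinMap.fiberCount_eq_zero_of_notMem (hm : IsMinMap n m) (hr : r ∉ Icc 1 n) :
    fiberCount m n r = 0 := by
  by_contra h
  obtain ⟨x, hx, rfl⟩ := fiberCount_ne_zero_iff_exists.1 h
  exact hr (hm.map_mem hx)

lemma IsMinMap.sum_fiberCount (hm : IsMinMap n m) (i : ℕ) :
    ∑ r ∈ Icc 1 i, fiberCount m n r = #{x ∈ Icc 1 n | m x ≤ i} := by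
  have hmaps : Set.MapsTo m ({x ∈ Icc 1 n | m x ≤ i} : Finset ℕ) (Icc 1 i : Finset ℕ) := by
    intro x hx
    have := hm x
    grind
  rw [card_eq_sum_card_fiberwise hmaps]
  refine sum_congr rfl fun r hr => congrArg card ?_
  grind

lemma IsMinMap.sum_fiberCount_self (hm : IsMinMap n m) :
    ∑ r ∈ Icc 1 n, fiberCount m n r = n := by
  rw [hm.sum_fiberCount, filter_true_of_mem fun x hx => (mem_Icc.1 (hm.map_mem hx)).2]
  simp

end FiberCount

section Fifo

open Finset

/-- The elements of `[k]` from which the greedy construction may continue a block at position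
`k + 1`: `m` records the block minima of the elements placed so far, `f r` is the prescribed size of
the block with minimum `r`, and `x` is pending if it is the last element so far of a block that has
not yet reached its prescribed size. -/
def pending (f m : ℕ → ℕ) (k : ℕ) : Set ℕ :=
  {x | x ∈ Icc 1 k ∧ (∀ y ∈ Ioc x k, m y ≠ m x) ∧ fiberCount m k (m x) < f (m x)}

/-- The first-in-first-out rule for filling blocks of prescribed sizes: position `k + 1` opens a new
block if a size `f (k + 1) ≠ 0` is prescribed there, and otherwise continues the block of the least
pending element. -/
structure IsFifo (f m : ℕ → ℕ) (n : ℕ) : Prop where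
  opens : ∀ i ∈ Icc 1 n, f i ≠ 0 → m i = i
  continues : ∀ k < n, f (k + 1) = 0 → ∃ x, IsLeast (pending f m k) x ∧ m (k + 1) = m x

variable {f m m' : ℕ → ℕ} {k n : ℕ}

lemma pending_congr (h : ∀ x ∈ Icc 1 k, m x = m' x) : pending f m k = pending f m' k := by
  ext x
  unfold pending
  rw [fiberCount_congr h]
  grind

lemma pending_injOn : Set.InjOn m (pending f m k) := by
  rintro x ⟨hx, hxlast, -⟩ y ⟨hy, hylast, -⟩ hxy
  grind

lemma exists_mem_pending {x : ℕ} (hx : x ∈ Icc 1 k) (hlt : fiberCount m k (m x) < f (m x)) :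
    ∃ y ∈ pending f m k, m y = m x := by
  have hne : {y ∈ Icc 1 k | m y = m x}.Nonempty := ⟨x, by simpa using hx⟩
  obtain ⟨y, hy, hmax⟩ := exists_max_image _ id hne
  have hyx : m y = m x := (mem_filter.1 hy).2
  refine ⟨y, ⟨(mem_filter.1 hy).1, fun z hz hzy => ?_, by rwa [hyx]⟩, hyx⟩
  have := hmax z
  grind

namespace IsFifo

lemma mono (hm : IsFifo f m n) (hkn : k ≤ n) : IsFifo f m k where
  opens i hi := hm.opens i (Icc_subset_Icc_right hkn hi)
  continues j hj := hm.continues j (hj.trans_le hkn)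

lemma congr (hm : IsFifo f m n) (h : ∀ x ∈ Icc 1 n, m x = m' x) : IsFifo f m' n where
  opens i hi hfi := by rw [← h i hi, hm.opens i hi hfi]
  continues k hk hfk := by
    obtain ⟨x, hx, hmx⟩ := hm.continues k hk hfk
    have hxk : x ∈ Icc 1 k := hx.1.1
    rw [pending_congr fun x hx => h x (by grind)] at hx
    exact ⟨x, hx, by grind⟩

lemma isMinMap (hm : IsFifo f m n) : IsMinMap n m := by
  intro i
  induction i using Nat.strong_induction_on with
  | _ i ih =>
    intro hi
    by_cases hfi : f i = 0
    · obtain ⟨k, rfl⟩ : ∃ k, i = k + 1 := ⟨i - 1, by grind⟩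
      obtain ⟨x, hx, hmx⟩ := hm.continues k (by grind) hfi
      have hxk : x ∈ Icc 1 k := hx.1.1
      have := ih x (by grind) (by grind)
      grind
    · have := hm.opens i hi hfi
      grind

lemma fiberCount_le (hm : IsFifo f m n) (r : ℕ) : fiberCount m n r ≤ f r := by
  induction n with
  | zero => simp [fiberCount]
  | succ n ih =>
    have hm' := hm.mono n.le_succ
    rw [fiberCount_succ]
    split_ifs with hr
    · subst hr
      by_cases hf : f (n + 1) = 0
      · obtain ⟨x, hx, hmx⟩ := hm.continues n n.lt_succ_self hf
        rw [hmx]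
        exact hx.1.2.2
      · rw [hm.opens (n + 1) (by simp) hf,
          hm'.isMinMap.fiberCount_eq_zero_of_notMem (by simp)]
        omega
    · exact ih hm'

lemma fiberCount_eq (hm : IsFifo f m n) (hsupp : ∀ r ∉ Icc 1 n, f r = 0)
    (hsum : ∑ r ∈ Icc 1 n, f r = n) : fiberCount m n = f := by
  funext r
  by_cases hr : r ∈ Icc 1 n
  · exact (sum_eq_sum_iff_of_le fun r _ => hm.fiberCount_le r).1
      (hm.isMinMap.sum_fiberCount_self.trans hsum.symm) r hr
  · rw [hsupp r hr, hm.isMinMap.fiberCount_eq_zero_of_notMem hr]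

lemma unique (hm : IsFifo f m n) (hm' : IsFifo f m' n) : ∀ i ∈ Icc 1 n, m i = m' i := by
  intro i
  induction i using Nat.strong_induction_on with
  | _ i ih =>
    intro hi
    by_cases hfi : f i = 0
    · obtain ⟨k, rfl⟩ : ∃ k, i = k + 1 := ⟨i - 1, by grind⟩
      obtain ⟨x, hx, hmx⟩ := hm.continues k (by grind) hfi
      obtain ⟨x', hx', hmx'⟩ := hm'.continues k (by grind) hfi
      have hxk : x ∈ Icc 1 k := hx.1.1
      rw [← pending_congr (m := m) fun y hy => ih y (by grind) (by grind)] at hx'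
      obtain rfl := hx.unique hx'
      rw [hmx, hmx', ih x (by grind) (by grind)]
    · rw [hm.opens i hi hfi, hm'.opens i hi hfi]

lemma pending_nonempty (hm : IsFifo f m k) (hk : k < ∑ r ∈ Icc 1 k, f r) :
    (pending f m k).Nonempty := by
  have hlt : ∑ r ∈ Icc 1 k, fiberCount m k r < ∑ r ∈ Icc 1 k, f r := by
    rwa [hm.isMinMap.sum_fiberCount_self]
  obtain ⟨r, hr, hrf⟩ := exists_lt_of_sum_lt hlt
  have hroot : m r = r := hm.opens r hr (by omega)
  obtain ⟨x, hx, -⟩ := exists_mem_pending (m := m) hr (by rwa [hroot])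
  exact ⟨x, hx⟩

lemma succ (hm : IsFifo f m n) (hopen : f (n + 1) ≠ 0 → m (n + 1) = n + 1)
    (hcont : f (n + 1) = 0 → ∃ x, IsLeast (pending f m n) x ∧ m (n + 1) = m x) :
    IsFifo f m (n + 1) where
  opens i hi hfi := by
    obtain rfl | hin := eq_or_ne i (n + 1)
    · exact hopen hfi
    · exact hm.opens i (by grind) hfi
  continues k hk hfk := by
    obtain rfl | hkn := eq_or_ne k n
    · exact hcont hfk
    · exact hm.continues k (by omega) hfk

end IsFifo

lemma exists_isFifo (hf : ∀ k < n, f (k + 1) = 0 → k < ∑ r ∈ Icc 1 k, f r) :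
    ∃ m, IsFifo f m n := by
  induction n with
  | zero => exact ⟨id, by simp, by simp⟩
  | succ n ih =>
    obtain ⟨m, hm⟩ := ih fun k hk => hf k (by omega)
    have hagree (v : ℕ) : ∀ x ∈ Icc 1 n, m x = Function.update m (n + 1) v x := by grind
    by_cases hfn : f (n + 1) = 0
    · have hne := hm.pending_nonempty (hf n n.lt_succ_self hfn)
      let x := sInf (pending f m n)
      have hx : IsLeast (pending f m n) x := ⟨Nat.sInf_mem hne, fun _ => Nat.sInf_le⟩
      have hxn : x ∈ Icc 1 n := hx.1.1
      refine ⟨_, (hm.congr (hagree (m x))).succ (absurd hfn) fun _ => ⟨x, ?_, ?_⟩⟩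
      · rwa [← pending_congr (hagree (m x))]
      · rw [Function.update_self, ← hagree (m x) x hxn]
    · exact ⟨_, (hm.congr (hagree (n + 1))).succ (fun _ => Function.update_self ..)
        fun h => absurd h hfn⟩

end Fifo

section BlockMin

open Finset

/-- The minimum of the block of `π` containing `i`; by the convention `sInf ∅ = 0` it is `0` if
`i ∉ [n]`. -/
noncomputable def blockMin {n : ℕ} (π : SetPartitionOn n) (i : ℕ) : ℕ := sInf (π.part i : Set ℕ)

/-- The size of the block of `π` with minimum `r`, or `0` if there is no such block.  The letters of
`psi n π` are the values of this function at `1, …, n - 1`. -/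
noncomputable abbrev blockSizeAt {n : ℕ} (π : SetPartitionOn n) : ℕ → ℕ := fiberCount (blockMin π) n

variable {n : ℕ} {π π' : SetPartitionOn n} {B : Finset ℕ} {i j k r x y : ℕ}

lemma blockMin_mem_part (hi : i ∈ Icc 1 n) : blockMin π i ∈ π.part i :=
  Nat.sInf_mem (s := (π.part i : Set ℕ)) (π.part_nonempty.2 hi)

lemma blockMin_le (hx : x ∈ π.part i) : blockMin π i ≤ x := Nat.sInf_le hx

lemma blockMin_eq_blockMin_iff (hi : i ∈ Icc 1 n) (hj : j ∈ Icc 1 n) :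
    blockMin π i = blockMin π j ↔ i ∈ π.part j := by
  rw [π.mem_part_iff_part_eq_part hi hj]
  refine ⟨fun h => ?_, fun h => by rw [blockMin, blockMin, h]⟩
  have hi' := π.part_eq_of_mem (π.part_mem.2 hi) (blockMin_mem_part hi)
  have hj' := π.part_eq_of_mem (π.part_mem.2 hj) (blockMin_mem_part hj)
  rw [← hi', ← hj', h]

lemma mem_block_iff (hB : B ∈ π.parts) (hi : i ∈ B) :
    x ∈ B ↔ x ∈ Icc 1 n ∧ blockMin π x = blockMin π i := by
  have hpart : π.part i = B := π.part_eq_of_mem hB hi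
  have hsub := π.le hB
  constructor
  · exact fun hx => ⟨hsub hx, (blockMin_eq_blockMin_iff (hsub hx) (hsub hi)).2 (by rwa [hpart])⟩
  · rintro ⟨hx, h⟩
    rwa [blockMin_eq_blockMin_iff hx (hsub hi), hpart] at h

lemma mem_part_iff (hi : i ∈ Icc 1 n) :
    x ∈ π.part i ↔ x ∈ Icc 1 n ∧ blockMin π x = blockMin π i :=
  mem_block_iff (π.part_mem.2 hi) (π.mem_part hi)

variable (π) in
lemma isMinMap_blockMin : IsMinMap n (blockMin π) := fun x hx => by
  have hmin := (mem_part_iff hx).1 (blockMin_mem_part (π := π) hx)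
  exact ⟨(mem_Icc.1 hmin.1).1, blockMin_le (π.mem_part hx), hmin.2⟩

lemma eq_of_blockMin_eq (h : ∀ i ∈ Icc 1 n, blockMin π i = blockMin π' i) : π = π' := by
  have hpart : ∀ i ∈ Icc 1 n, π.part i = π'.part i := fun i hi => by
    ext x
    rw [mem_part_iff hi, mem_part_iff hi]
    exact and_congr_right fun hx => by rw [h x hx, h i hi]
  refine Finpartition.ext (coe_injective ?_)
  rw [← π.part_surjOn.image_eq_of_mapsTo fun i hi => π.part_mem.2 hi,
    ← π'.part_surjOn.image_eq_of_mapsTo fun i hi => π'.part_mem.2 hi]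
  exact Set.image_congr hpart

lemma exists_blockMin_eq {m : ℕ → ℕ} (hm : IsMinMap n m) :
    ∃ π : SetPartitionOn n, ∀ i ∈ Icc 1 n, blockMin π i = m i := by
  classical
  let π := Finpartition.ofSetSetoid (Setoid.ker m) (Icc 1 n)
  have mem_part {i j : ℕ} : j ∈ π.part i ↔ i ∈ Icc 1 n ∧ j ∈ Icc 1 n ∧ m i = m j :=
    Finpartition.mem_part_ofSetSetoid_iff_rel _
  refine ⟨π, fun i hi => le_antisymm (blockMin_le ?_) ?_⟩
  · exact mem_part.2 ⟨hi, hm.map_mem hi, (hm i hi).2.2.symm⟩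
  · obtain ⟨-, hmem, hmi⟩ := mem_part.1 (blockMin_mem_part (π := π) hi)
    exact hmi ▸ (hm _ hmem).2.1

variable (π) in
lemma sum_blockSizeAt : ∑ r ∈ Icc 1 n, blockSizeAt π r = n :=
  (isMinMap_blockMin π).sum_fiberCount_self

lemma blockSizeAt_ne_zero_iff (hr : r ∈ Icc 1 n) : blockSizeAt π r ≠ 0 ↔ blockMin π r = r :=
  (isMinMap_blockMin π).fiberCount_ne_zero_iff hr

lemma card_part (hr : blockMin π r = r) (hrn : r ∈ Icc 1 n) :
    #(π.part r) = blockSizeAt π r := by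
  refine congrArg card (ext fun x => ?_)
  rw [mem_part_iff hrn, hr, mem_filter]

lemma sum_card_blocks_with_min (hr : r ∈ Icc 1 n) :
    ∑ B ∈ π.parts with r ∈ B ∧ ∀ x ∈ B, r ≤ x, #B = blockSizeAt π r := by
  have hpart : {B ∈ π.parts | r ∈ B} = {π.part r} := by
    ext B
    rw [mem_filter, mem_singleton]
    constructor
    · exact fun ⟨hB, hrB⟩ => (π.part_eq_of_mem hB hrB).symm
    · rintro rfl
      exact ⟨π.part_mem.2 hr, π.mem_part hr⟩
  rw [← filter_filter, hpart, filter_singleton]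
  split_ifs with hmin
  · rw [sum_singleton, card_part _ hr]
    exact le_antisymm (blockMin_le (π.mem_part hr)) (hmin _ (blockMin_mem_part hr))
  · rw [sum_empty, eq_comm]
    by_contra h
    rw [← ne_eq, blockSizeAt_ne_zero_iff hr] at h
    exact hmin fun x hx => h ▸ blockMin_le hx

lemma card_filter_parts_card_eq (hj : 0 < j) :
    #{B ∈ π.parts | #B = j} = #{r ∈ Icc 1 n | blockSizeAt π r = j} := by
  have hroot {r : ℕ} (hr : r ∈ Icc 1 n) (hrj : blockSizeAt π r = j) : blockMin π r = r :=
    (blockSizeAt_ne_zero_iff hr).1 (hrj.trans_ne hj.ne')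
  symm
  refine card_bij (fun r _ => π.part r) ?_ ?_ ?_
  · intro r hr
    obtain ⟨hr, hrj⟩ := mem_filter.1 hr
    rw [mem_filter, card_part (hroot hr hrj) hr]
    exact ⟨π.part_mem.2 hr, hrj⟩
  · intro r hr s hs hrs
    rw [mem_filter] at hr hs
    rw [← hroot hr.1 hr.2, ← hroot hs.1 hs.2, blockMin, blockMin, hrs]
  · intro B hB
    obtain ⟨hB, hBj⟩ := mem_filter.1 hB
    obtain ⟨x, hx, rfl⟩ := π.part_surjOn hB
    have hmem := blockMin_mem_part (π := π) hx
    have hpart := π.part_eq_of_mem (π.part_mem.2 hx) hmem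
    have hrn := (isMinMap_blockMin π).map_mem hx
    refine ⟨blockMin π x, mem_filter.2 ⟨hrn, ?_⟩, hpart⟩
    rw [← card_part (isMinMap_blockMin π x hx).2.2 hrn, hpart, hBj]

lemma isCut_iff_forall_le : IsCut π i ↔
    i ∈ Icc 1 (n - 1) ∧ ∀ x ∈ Icc 1 n, blockMin π x ≤ i → x ≤ i := by
  rw [IsCut, mem_Icc, and_assoc]
  refine and_congr_right fun _ => and_congr_right fun _ => ⟨fun h x hx hxi => ?_, fun h B hB => ?_⟩
  · rcases h _ (π.part_mem.2 hx) with hle | hgt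
    · exact hle x (π.mem_part hx)
    · exact absurd (hgt _ (blockMin_mem_part hx)) hxi.not_gt
  · by_contra! ⟨⟨x, hx, hix⟩, y, hy, hyi⟩
    obtain ⟨hxn, hxy⟩ := (mem_block_iff hB hy).1 hx
    have := (isMinMap_blockMin π y (π.le hB hy)).2.1
    exact hix.not_ge (h x hxn (by omega))

lemma isCut_iff_sum_le : IsCut π i ↔
    i ∈ Icc 1 (n - 1) ∧ ∑ r ∈ Icc 1 i, blockSizeAt π r ≤ i := by
  rw [isCut_iff_forall_le]
  refine and_congr_right fun hi => ?_
  have hsub : Icc 1 i ⊆ {x ∈ Icc 1 n | blockMin π x ≤ i} := fun x hx => by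
    have := isMinMap_blockMin π x
    grind
  have hcard := eq_iff_card_le_of_subset hsub
  rw [Nat.card_Icc, Nat.add_sub_cancel] at hcard
  rw [(isMinMap_blockMin π).sum_fiberCount, hcard, ← hsub.ge_iff_eq]
  refine ⟨fun h x hx => ?_, fun h x hx hxi => (mem_Icc.1 (h (mem_filter.2 ⟨hx, hxi⟩))).2⟩
  obtain ⟨hxn, hxi⟩ := mem_filter.1 hx
  exact mem_Icc.2 ⟨(mem_Icc.1 hxn).1, h x hxn hxi⟩

lemma connected_iff :
    Connected π ↔ ∀ i ∈ Icc 1 (n - 1), i < ∑ r ∈ Icc 1 i, blockSizeAt π r := by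
  simp only [Connected, isCut_iff_sum_le, not_and, not_le]

lemma isArc_iff : IsArc π i j ↔ i < j ∧ 1 ≤ i ∧ j ≤ n ∧ blockMin π i = blockMin π j ∧
    ∀ k ∈ Ioo i j, blockMin π k ≠ blockMin π i := by
  constructor
  · rintro ⟨hij, B, hB, hi, hj, hgap⟩
    have hiB := fun x => mem_block_iff (x := x) hB hi
    grind
  · rintro ⟨hij, hi, hj, hmin, hgap⟩
    have hin : i ∈ Icc 1 n := by grind
    have hiB := fun x => mem_part_iff (π := π) (x := x) hin
    exact ⟨hij, π.part i, π.part_mem.2 hin, π.mem_part hin, by grind, by grind⟩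

lemma mem_pending_iff (hk : k ≤ n) :
    x ∈ pending (blockSizeAt π) (blockMin π) k ↔ x ≤ k ∧ ∃ y, k < y ∧ IsArc π x y := by
  unfold pending
  rw [Set.mem_ofPred_eq, fiberCount_lt_fiberCount_iff hk]
  simp only [isArc_iff]
  constructor
  · rintro ⟨hx, hlast, hex⟩
    have hne : {y ∈ Ioc k n | blockMin π y = blockMin π x}.Nonempty := by
      obtain ⟨y, hy, hyx⟩ := hex
      exact ⟨y, mem_filter.2 ⟨hy, hyx⟩⟩
    obtain ⟨y, hy, hfirst⟩ := exists_min_image _ id hne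
    simp only [mem_filter, and_imp, id] at hy hfirst
    clear hne
    exact ⟨(mem_Icc.1 hx).2, y, by grind⟩
  · rintro ⟨hxk, y, hky, hxy⟩
    exact ⟨by grind, by grind, y, by grind⟩

lemma exists_mem_pending_of_blockSizeAt_eq_zero (hk : k < n) (hzero : blockSizeAt π (k + 1) = 0) :
    ∃ b ∈ pending (blockSizeAt π) (blockMin π) k, blockMin π b = blockMin π (k + 1) := by
  have hkn : k + 1 ∈ Icc 1 n := by grind
  obtain ⟨hpos, hle, hroot⟩ := isMinMap_blockMin π (k + 1) hkn
  have hne : blockMin π (k + 1) ≠ k + 1 := fun h => (blockSizeAt_ne_zero_iff hkn).2 h hzero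
  obtain ⟨b, hb, hbk⟩ := exists_mem_pending (f := blockSizeAt π) (m := blockMin π) (k := k)
    (x := blockMin π (k + 1)) (by grind)
    ((fiberCount_lt_fiberCount_iff hk.le).2 ⟨k + 1, by grind⟩)
  exact ⟨b, hb, hbk.trans hroot⟩

theorem nonnesting_iff_isFifo :
    Nonnesting π ↔ IsFifo (blockSizeAt π) (blockMin π) n := by
  constructor
  · refine fun hπ => ⟨fun i hi => (blockSizeAt_ne_zero_iff hi).1, ?_⟩
    intro k hk hzero
    obtain ⟨b, hb, hbk⟩ := exists_mem_pending_of_blockSizeAt_eq_zero hk hzero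
    refine ⟨b, ⟨hb, fun x hx => ?_⟩, hbk.symm⟩
    -- An older pending element `x < b` would have an arc `(x, y)` nesting the arc `(b, k + 1)`.
    by_contra! hxb
    obtain ⟨-, y, hky, hxy⟩ := (mem_pending_iff hk.le).1 hx
    have hyk : y ≠ k + 1 := by
      rintro rfl
      have := pending_injOn hx hb (hbk ▸ (isArc_iff.1 hxy).2.2.2.1)
      omega
    have hbk' : IsArc π b (k + 1) := isArc_iff.2 (by have := hb.1; have := hb.2.1; grind)
    exact hπ ⟨x, b, k + 1, y, hxb, hbk'.1, by omega, hxy, hbk'⟩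
  · rintro hπ ⟨a, b, c, d, hab, hbc, hcd, had, hbc'⟩
    obtain ⟨k, rfl⟩ : ∃ k, c = k + 1 := ⟨c - 1, by omega⟩
    have hkn : k < n := (isArc_iff.1 hbc').2.2.1
    have ha := (mem_pending_iff hkn.le).2 ⟨by omega, d, by omega, had⟩
    have hb := (mem_pending_iff hkn.le).2 ⟨by omega, k + 1, by omega, hbc'⟩
    have hzero : blockSizeAt π (k + 1) = 0 := by
      by_contra h
      have := hπ.opens (k + 1) (by grind) h
      have := isMinMap_blockMin π b
      have := isArc_iff.1 hbc'
      grind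
    obtain ⟨x, hx, hkx⟩ := hπ.continues k hkn hzero
    have hbx : b = x := pending_injOn hb hx.1 ((isArc_iff.1 hbc').2.2.2.1.trans hkx)
    exact hab.not_ge (hbx ▸ hx.2 ha)

lemma Nonnesting.ext (hπ : Nonnesting π) (hπ' : Nonnesting π')
    (h : blockSizeAt π = blockSizeAt π') : π = π' := by
  rw [nonnesting_iff_isFifo] at hπ hπ'
  exact eq_of_blockMin_eq (hπ.unique (h ▸ hπ'))

lemma exists_nonnesting_blockSizeAt_eq {f : ℕ → ℕ} (hsupp : ∀ r ∉ Icc 1 n, f r = 0)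
    (hsum : ∑ r ∈ Icc 1 n, f r = n) (hf : ∀ k < n, f (k + 1) = 0 → k < ∑ r ∈ Icc 1 k, f r) :
    ∃ π : SetPartitionOn n, Nonnesting π ∧ blockSizeAt π = f := by
  obtain ⟨m, hm⟩ := exists_isFifo hf
  obtain ⟨π, hπ⟩ := exists_blockMin_eq hm.isMinMap
  have hsize : blockSizeAt π = f := (fiberCount_congr hπ).trans (hm.fiberCount_eq hsupp hsum)
  refine ⟨π, nonnesting_iff_isFifo.2 ?_, hsize⟩
  rw [hsize]
  exact hm.congr fun i hi => (hπ i hi).symm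

end BlockMin

section Word

open Finset

/-- The word `f(1) f(2) ⋯ f(N)`. -/
def word (f : ℕ → ℕ) (N : ℕ) : List ℕ := (List.range N).map fun k => f (k + 1)

variable {f g : ℕ → ℕ} {N : ℕ}

lemma length_word (f : ℕ → ℕ) (N : ℕ) : (word f N).length = N := by simp [word]

lemma word_succ (f : ℕ → ℕ) (N : ℕ) : word f (N + 1) = word f N ++ [f (N + 1)] := by
  simp [word, List.range_succ]

lemma take_word (f : ℕ → ℕ) {j : ℕ} (hj : j ≤ N) : (word f N).take j = word f j := by
  rw [word, ← List.map_take, List.take_range, min_eq_left hj, word]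

lemma word_inj : word f N = word g N ↔ ∀ r ∈ Icc 1 N, f r = g r := by
  rw [word, word, List.map_inj_left]
  refine ⟨fun h r hr => ?_, fun h k hk => h (k + 1) (by grind)⟩
  obtain ⟨k, rfl⟩ : ∃ k, r = k + 1 := ⟨r - 1, by grind⟩
  exact h k (by grind)

lemma exists_word_eq (w : List ℕ) :
    ∃ f : ℕ → ℕ, word f w.length = w ∧ ∀ r ∉ Icc 1 w.length, f r = 0 := by
  refine ⟨fun r => (0 :: w).getD r 0, List.ext_getElem (by simp [word]) ?_, fun r hr => ?_⟩
  · intro i _ hi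
    simp [word, hi]
  · rcases r with _ | k
    · rfl
    · exact List.getD_eq_default _ _ (by grind)

lemma sum_word (f : ℕ → ℕ) (N : ℕ) : (word f N).sum = ∑ r ∈ Icc 1 N, f r := by
  induction N with
  | zero => simp [word]
  | succ N ih =>
    rw [word_succ, List.sum_append, ih, sum_Icc_succ_top (by omega), List.sum_singleton]

lemma count_word (f : ℕ → ℕ) (N a : ℕ) : (word f N).count a = #{r ∈ Icc 1 N | f r = a} := by
  induction N with
  | zero => simp [word]
  | succ N ih =>
    rw [word_succ, List.count_append, ih, ← fiberCount, ← fiberCount, fiberCount_succ]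
    simp [List.count_singleton]

lemma wt_eq_sum_sub_length (w : List ℕ) : wt w = w.sum - w.length := by
  induction w with
  | nil => rfl
  | cons a w ih =>
    have hcons : wt (a :: w) = a - 1 + wt w := by simp [wt]
    rw [hcons, ih]
    push_cast [List.sum_cons, List.length_cons]
    ring

lemma word_mem_Bset_iff : word f N ∈ Bset ↔
    ∑ r ∈ Icc 1 N, f r = N + 1 ∧ ∀ i ∈ Icc 1 N, i < ∑ r ∈ Icc 1 i, f r := by
  have hwt (j : ℕ) : wt (word f j) = (∑ r ∈ Icc 1 j, f r : ℕ) - (j : ℤ) := by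
    rw [wt_eq_sum_sub_length, sum_word, length_word]
  rw [Bset, Set.mem_ofPred_eq, hwt, length_word]
  refine and_congr (by omega) (forall_congr' fun i => ?_)
  rw [mem_Icc, and_imp]
  refine forall_congr' fun _ => forall_congr' fun hiN => ?_
  rw [take_word f hiN, hwt]
  omega

lemma count_zero_add_sum_count {n : ℕ} {w : List ℕ} (hw : ∀ a ∈ w, a ≤ n) :
    w.count 0 + ∑ i : Fin n, w.count (i.1 + 1) = w.length := by
  have hcount : ∑ a ∈ range (n + 1), w.count a = w.length := by
    simpa using Multiset.sum_count_eq_card (s := range (n + 1)) (m := (w : Multiset ℕ))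
      fun a ha => mem_range_succ_iff.2 (hw a ha)
  rw [← hcount, sum_range_succ', sum_range, add_comm]

lemma le_of_mem_of_mem_Bset {w : List ℕ} (hw : w ∈ Bset) {a : ℕ} (ha : a ∈ w) :
    a ≤ w.length + 1 := by
  have hwt : wt w = 1 := hw.1
  rw [wt_eq_sum_sub_length] at hwt
  have := List.le_sum_of_mem ha
  omega

end Word

section Psi

open Finset

variable {n : ℕ} {π : SetPartitionOn n} {r : ℕ}

lemma psi_eq_word (π : SetPartitionOn n) : psi n π = word (blockSizeAt π) (n - 1) := by
  refine List.map_congr_left fun k hk => sum_card_blocks_with_min ?_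
  grind

lemma length_psi (π : SetPartitionOn n) : (psi n π).length = n - 1 := by
  rw [psi_eq_word, length_word]

lemma Connected.blockSizeAt_self (hπ : Connected π) (hn : 1 < n) : blockSizeAt π n = 0 := by
  obtain ⟨k, rfl⟩ : ∃ k, n = k + 1 := ⟨n - 1, by omega⟩
  have hk := connected_iff.1 hπ k (by grind)
  have hsum := sum_blockSizeAt π
  rw [sum_Icc_succ_top (by omega)] at hsum
  omega

lemma Connected.blockSizeAt_eq_zero (hπ : Connected π) (hn : 1 < n) (hr : r ∉ Icc 1 (n - 1)) :
    blockSizeAt π r = 0 := by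
  obtain rfl | hrn := eq_or_ne r n
  · exact hπ.blockSizeAt_self hn
  · exact (isMinMap_blockMin π).fiberCount_eq_zero_of_notMem (by grind)

lemma psi_mem_Bset_iff (hn : 1 < n) : psi n π ∈ Bset ↔ Connected π := by
  rw [psi_eq_word, word_mem_Bset_iff, ← connected_iff, and_iff_right_iff_imp]
  intro hπ
  rw [Nat.sub_add_cancel hn.le]
  conv_rhs => rw [← sum_blockSizeAt π]
  exact sum_subset (Icc_subset_Icc_right (n.sub_le 1)) fun r _ => hπ.blockSizeAt_eq_zero hn

lemma hasType_iff_count_psi (hπ : Connected π) (hn : 1 < n) {r : Fin n → ℕ} :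
    HasType π r ↔ ∀ i : Fin n, (psi n π).count (i.1 + 1) = r i := by
  refine forall_congr' fun i => ?_
  rw [card_filter_parts_card_eq i.1.succ_pos, psi_eq_word, count_word]
  suffices {s ∈ Icc 1 n | blockSizeAt π s = i.1 + 1} =
      {s ∈ Icc 1 (n - 1) | blockSizeAt π s = i.1 + 1} by rw [this]
  have hzero := fun s => hπ.blockSizeAt_eq_zero hn (r := s)
  grind

theorem psi_bijOn_connected_nonnesting (hn : 1 < n) :
    Set.BijOn (psi n) {π | Nonnesting π ∧ Connected π} {w | w.length = n - 1 ∧ w ∈ Bset} := by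
  refine ⟨fun π hπ => ⟨length_psi π, (psi_mem_Bset_iff hn).2 hπ.2⟩, ?_, ?_⟩
  · rintro π ⟨hπ, hconn⟩ π' ⟨hπ', hconn'⟩ heq
    rw [psi_eq_word, psi_eq_word, word_inj] at heq
    refine hπ.ext hπ' (funext fun r => ?_)
    by_cases hr : r ∈ Icc 1 (n - 1)
    · exact heq r hr
    · rw [hconn.blockSizeAt_eq_zero hn hr, hconn'.blockSizeAt_eq_zero hn hr]
  · rintro w ⟨hlen, hw⟩
    obtain ⟨f, hfw, hsupp⟩ := exists_word_eq w
    rw [hlen] at hfw hsupp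
    obtain ⟨hsum, hballot⟩ := word_mem_Bset_iff.1 (hfw ▸ hw)
    have hsum' : ∑ r ∈ Icc 1 n, f r = n := by
      rw [← sum_subset (Icc_subset_Icc_right (n.sub_le 1)) fun r _ => hsupp r, hsum,
        Nat.sub_add_cancel hn.le]
    have hfill : ∀ k < n, f (k + 1) = 0 → k < ∑ r ∈ Icc 1 k, f r := by
      rintro (_ | k) hk hzero
      · have := hballot 1 (by grind)
        simp_all
      · exact hballot (k + 1) (by grind)
    obtain ⟨π, hπ, hsize⟩ :=
      exists_nonnesting_blockSizeAt_eq (fun r hr => hsupp r (by grind)) hsum' hfill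
    have hpsi : psi n π = w := by rw [psi_eq_word, hsize, hfw]
    exact ⟨π, ⟨hπ, (psi_mem_Bset_iff hn).1 (hpsi ▸ hw)⟩, hpsi⟩

end Psi

/-- `ψ` is a bijection from the connected nonnesting partitions of `[n]` of type `r` onto
`ℬ(r)`, the words of length `n - 1` in `ℬ` with `n - |r| - 1` letters `0` and `r i`
letters `i` for `1 ≤ i ≤ n`. -/
theorem psi_bijOn_nonnesting (n : ℕ) (hn : 1 < n) (r : Fin n → ℕ)
    (hrv : ∑ i, (i.1 + 1) * r i = n) (hr : ∑ i, r i < n) :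
    Set.BijOn (psi n)
      {π : SetPartitionOn n | Nonnesting π ∧ HasType π r ∧ Connected π}
      {w : List ℕ | w.length = n - 1 ∧ w ∈ Bset ∧
        w.count 0 = n - (∑ i, r i) - 1 ∧ ∀ i : Fin n, w.count (i.1 + 1) = r i} := by
  have hsub : {w : List ℕ | w.length = n - 1 ∧ w ∈ Bset ∧
      w.count 0 = n - (∑ i, r i) - 1 ∧ ∀ i : Fin n, w.count (i.1 + 1) = r i} ⊆
      {w | w.length = n - 1 ∧ w ∈ Bset} := fun w hw => ⟨hw.1, hw.2.1⟩
  convert (psi_bijOn_connected_nonnesting hn).subset_right hsub using 1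
  ext π
  constructor
  · rintro ⟨hnest, htype, hconn⟩
    have hB := (psi_mem_Bset_iff hn).2 hconn
    have hcount := (hasType_iff_count_psi hconn hn).1 htype
    have hzero := count_zero_add_sum_count (n := n) fun a ha => by
      have := le_of_mem_of_mem_Bset hB ha
      rw [length_psi] at this
      omega
    have hsum : ∑ i : Fin n, (psi n π).count (i.1 + 1) = ∑ i, r i :=
      Finset.sum_congr rfl fun i _ => hcount i
    rw [length_psi, hsum] at hzero
    exact ⟨⟨hnest, hconn⟩, length_psi π, hB, by omega, hcount⟩
  · rintro ⟨⟨hnest, hconn⟩, -, -, -, hcount⟩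
    exact ⟨hnest, (hasType_iff_count_psi hconn hn).2 hcount, hconn⟩
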